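/- arXiv:1011.2473 — 3 statements merged into one kernel-verified Lean document; each statement's English description precedes it below -/
import Mathlib

section
/- Let n ≥ 1 and for each j = 1,…,n let R_j : (0,∞) → ℝ be differentiable with R_j(t) > 0 for all t > 0. Define p : (0,∞) × ℝⁿ → ℝ by p(t,x) = ∏_{j=1}^n (2π R_j(t))^{-1/2} · exp( − ∑_{j=1}^n x_j² / (2 R_j(t)) ). Then for every t > 0 and every x ∈ ℝⁿ, ∂_t p(t,x) = (1/2) ∑_{j=1}^n R_j′(t) · ∂²_{x_j} p(t,x). -/
/-
The density factors as `∏ j, g (R j t) (x j)`, where `g r y` is the centred one-dimensional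
Gaussian density of variance `r`. Since `g` solves the heat equation `∂_r g = (1/2) ∂_y² g`, the
chain rule makes each factor a solution of its own one-dimensional equation, and the product rule
adds the contributions of the coordinates.
-/

section SeparationOfVariables

open Function

variable {ι 𝕜 𝕜' : Type*} [Fintype ι] [DecidableEq ι] [NontriviallyNormedField 𝕜]
  [NormedField 𝕜'] [NormedAlgebra 𝕜 𝕜']

lemma iteratedDeriv_prod_update (m : ℕ) (f : ι → 𝕜 → 𝕜') (x : ι → 𝕜) (j : ι) (z : 𝕜) :
    iteratedDeriv m (fun y => ∏ i, f i (update x j y i)) z =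
      (∏ i ∈ Finset.univ.erase j, f i (x i)) * iteratedDeriv m (f j) z := by
  have hsplit (y : 𝕜) : ∏ i, f i (update x j y i) =
      (∏ i ∈ Finset.univ.erase j, f i (x i)) * f j y := by
    rw [← Finset.prod_erase_mul _ _ (Finset.mem_univ j), update_self]
    congr 1
    refine Finset.prod_congr rfl fun i hi => ?_
    rw [update_of_ne (Finset.ne_of_mem_erase hi)]
  simp only [hsplit, iteratedDeriv_const_mul_field]

lemma hasDerivAt_prod_sum_iteratedDeriv {m : ℕ} {g : ι → 𝕜 → 𝕜 → 𝕜'} {c : ι → 𝕜'}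
    {t : 𝕜} {x : ι → 𝕜}
    (hg : ∀ j, HasDerivAt (fun s => g j s (x j)) (c j * iteratedDeriv m (g j t) (x j)) t) :
    HasDerivAt (fun s => ∏ j, g j s (x j))
      (∑ j, c j * iteratedDeriv m (fun y => ∏ i, g i t (update x j y i)) (x j)) t := by
  refine (HasDerivAt.fun_finsetProd fun j _ => hg j).congr_deriv ?_
  refine Finset.sum_congr rfl fun j _ => ?_
  rw [iteratedDeriv_prod_update m (fun i => g i t), smul_eq_mul]
  ring

end SeparationOfVariables

/-- The density at `y` of the centred Gaussian law on `ℝ` of variance `r`. Unlike in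
`ProbabilityTheory.gaussianPDFReal`, the variance is a real number, so that one can differentiate
in it; the formula is meaningful for `0 < r`. -/
noncomputable def gaussianDensity (r y : ℝ) : ℝ :=
  (2 * Real.pi * r) ^ (-(1 / 2) : ℝ) * Real.exp (-(y ^ 2 / (2 * r)))

lemma prod_gaussianDensity {ι : Type*} (s : Finset ι) (r x : ι → ℝ) :
    ∏ j ∈ s, gaussianDensity (r j) (x j) =
      (∏ j ∈ s, (2 * Real.pi * r j) ^ (-(1 / 2) : ℝ)) *
        Real.exp (-∑ j ∈ s, x j ^ 2 / (2 * r j)) := by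
  simp only [gaussianDensity, Finset.prod_mul_distrib, ← Real.exp_sum, Finset.sum_neg_distrib]

lemma hasDerivAt_gaussianDensity (r y : ℝ) :
    HasDerivAt (gaussianDensity r) (-(y / r) * gaussianDensity r y) y := by
  have hexponent : HasDerivAt (fun z : ℝ => -(z ^ 2 / (2 * r))) (-(y / r)) y := by
    refine ((hasDerivAt_pow 2 y).div_const (2 * r)).fun_neg.congr_deriv ?_
    rw [← mul_div_mul_left y r two_ne_zero, Nat.cast_ofNat, pow_one]
  exact (hexponent.exp.const_mul _).congr_deriv (by rw [gaussianDensity]; ring)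

lemma iteratedDeriv_two_gaussianDensity (r y : ℝ) :
    iteratedDeriv 2 (gaussianDensity r) y = (y ^ 2 / r ^ 2 - 1 / r) * gaussianDensity r y := by
  have hderiv : deriv (gaussianDensity r) = fun z => -(z / r) * gaussianDensity r z :=
    funext fun z => (hasDerivAt_gaussianDensity r z).deriv
  have hderiv₂ := ((hasDerivAt_id' y).div_const r).fun_neg.fun_mul (hasDerivAt_gaussianDensity r y)
  rw [iteratedDeriv_succ, iteratedDeriv_one, hderiv, hderiv₂.deriv]
  ring

lemma hasDerivAt_gaussianDensity_variance {r : ℝ} (hr : 0 < r) (y : ℝ) :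
    HasDerivAt (fun s => gaussianDensity s y)
      (1 / 2 * (y ^ 2 / r ^ 2 - 1 / r) * gaussianDensity r y) r := by
  have hbase : 0 < 2 * Real.pi * r := by positivity
  have hprefactor : HasDerivAt (fun s : ℝ => (2 * Real.pi * s) ^ (-(1 / 2) : ℝ))
      (-(1 / (2 * r)) * (2 * Real.pi * r) ^ (-(1 / 2) : ℝ)) r := by
    refine (((hasDerivAt_id' r).const_mul (2 * Real.pi)).rpow_const (p := -(1 / 2))
      (Or.inl hbase.ne')).congr_deriv ?_
    rw [Real.rpow_sub_one hbase.ne']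
    field_simp
  have hexponent : HasDerivAt (fun s : ℝ => -(y ^ 2 / (2 * s))) (y ^ 2 / (2 * r ^ 2)) r := by
    refine ((hasDerivAt_const r (y ^ 2)).fun_div ((hasDerivAt_id' r).const_mul 2)
      (by positivity)).fun_neg.congr_deriv ?_
    field_simp
    ring
  refine (hprefactor.fun_mul hexponent.exp).congr_deriv ?_
  rw [gaussianDensity]
  field_simp
  ring

lemma gaussianDensity_heat_equation {r : ℝ} (hr : 0 < r) (y : ℝ) :
    HasDerivAt (fun s => gaussianDensity s y)
      (1 / 2 * iteratedDeriv 2 (gaussianDensity r) y) r := by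
  rw [iteratedDeriv_two_gaussianDensity, ← mul_assoc]
  exact hasDerivAt_gaussianDensity_variance hr y

theorem fpk_gaussian_general {ι : Type*} [Fintype ι] [DecidableEq ι] {R : ι → ℝ → ℝ} {R' : ι → ℝ}
    {t : ℝ} (hR : ∀ j, HasDerivAt (R j) (R' j) t) (hpos : ∀ j, 0 < R j t)
    {p : ℝ → (ι → ℝ) → ℝ}
    (hp : ∀ᶠ s in nhds t, ∀ x : ι → ℝ,
      p s x = (∏ j, (2 * Real.pi * R j s) ^ (-(1 / 2) : ℝ)) *
        Real.exp (-∑ j, (x j) ^ 2 / (2 * R j s)))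
    (x : ι → ℝ) :
    HasDerivAt (fun s => p s x)
      ((1 / 2) * ∑ j, R' j * iteratedDeriv 2 (fun y => p t (Function.update x j y)) (x j)) t := by
  have hfactor : ∀ᶠ s in nhds t, ∀ x, p s x = ∏ j, gaussianDensity (R j s) (x j) :=
    hp.mono fun s hs x => (hs x).trans (prod_gaussianDensity _ (R · s) x).symm
  have hevolution (j : ι) : HasDerivAt (fun s => gaussianDensity (R j s) (x j))
      (1 / 2 * R' j * iteratedDeriv 2 (gaussianDensity (R j t)) (x j)) t :=
    ((gaussianDensity_heat_equation (hpos j) (x j)).comp t (hR j)).congr_deriv (by ring)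
  have hprod := hasDerivAt_prod_sum_iteratedDeriv (g := fun j s => gaussianDensity (R j s))
    hevolution
  simp only [hfactor.self_of_nhds, Finset.mul_sum, ← mul_assoc]
  exact hprod.congr_of_eventuallyEq (hfactor.mono fun s hs => hs x)

/- STATEMENT 0 (Proposition 2.1): FPK equation for an n-dimensional zero-mean Gaussian
process with independent components having variance functions R_j. -/
theorem fpk_gaussian (n : ℕ) (hn : 1 ≤ n) (R : Fin n → ℝ → ℝ)
    (hdiff : ∀ j, ∀ t : ℝ, 0 < t → DifferentiableAt ℝ (R j) t)
    (hpos : ∀ j, ∀ t : ℝ, 0 < t → 0 < R j t)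
    (p : ℝ → (Fin n → ℝ) → ℝ)
    (hp : ∀ t : ℝ, 0 < t → ∀ x : Fin n → ℝ,
      p t x = (∏ j, (2 * Real.pi * R j t) ^ (-(1 / 2) : ℝ)) *
        Real.exp (-∑ j, (x j) ^ 2 / (2 * R j t)))
    (t : ℝ) (ht : 0 < t) (x : Fin n → ℝ) :
    deriv (fun s => p s x) t =
      (1 / 2) * ∑ j, deriv (R j) t *
        iteratedDeriv 2 (fun y => p t (Function.update x j y)) (x j) := by
  exact (fpk_gaussian_general (fun j => (hdiff j t ht).hasDerivAt) (fun j => hpos j t ht)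
    ((lt_mem_nhds ht).mono hp) x).deriv
end

section
/- Let β ∈ (0,1) and let g : (0,∞) × (0,∞) → [0,∞) be measurable with ∫₀^∞ e^{−st} g(t,τ) dt = e^{−τ s^β} for all s > 0 and all τ > 0. Define G(t,τ) = ∫₀^t g(u,τ) du. Fix s > 0 and τ₀ > 0, and suppose there exist δ > 0 with δ < τ₀ and a measurable function F : (0,∞) → [0,∞) with ∫₀^∞ e^{−st} F(t) dt < ∞ such that for almost every t > 0 the map τ ↦ G(t,τ) is differentiable on (τ₀ − δ, τ₀ + δ) with |∂_τ G(t,τ)| ≤ F(t) there. Then, writing h(t,τ) = −∂_τ G(t,τ), one has ∫₀^∞ e^{−st} h(t,τ₀) dt = s^{β−1} e^{−τ₀ s^β}. -/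
open MeasureTheory

/-!
For fixed `τ`, the primitive `G(·, τ)` of `g(·, τ)` has Laplace transform `s⁻¹ e^{-τ φ}`, where
`φ = s ^ β`: multiplied by `e^{-st}`, it is the convolution on the half-line of `e^{-st} g(t, τ)`
with `e^{-st}`. The domination by `F` allows this identity to be differentiated in `τ` under the
integral sign.
-/

open Filter Set
open scoped Topology

section Laplace

variable {E : Type*} [NormedAddCommGroup E] [NormedSpace ℝ E] {s : ℝ} {k : ℝ → E}

lemma intervalIntegral_exp_smul_smul_exp_sub (t : ℝ) :
    ∫ u in 0..t, Real.exp (-s * (t - u)) • Real.exp (-s * u) • k u =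
      Real.exp (-s * t) • ∫ u in 0..t, k u := by
  simp_rw [smul_smul, ← Real.exp_add, mul_sub, sub_add_cancel]
  exact intervalIntegral.integral_smul _ _

lemma integrableOn_exp_smul_primitive (hs : 0 < s)
    (hk : IntegrableOn (fun t ↦ Real.exp (-s * t) • k t) (Ioi 0)) :
    IntegrableOn (fun t ↦ Real.exp (-s * t) • ∫ u in 0..t, k u) (Ioi 0) := by
  rw [← integrable_indicator_iff measurableSet_Ioi]
  simp_rw [← intervalIntegral_exp_smul_smul_exp_sub]
  exact integrable_posConvolution hk (integrableOn_exp_mul_Ioi (neg_lt_zero.2 hs) 0)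
    (ContinuousLinearMap.lsmul ℝ ℝ).flip

lemma integral_exp_smul_primitive [CompleteSpace E] (hs : 0 < s)
    (hk : IntegrableOn (fun t ↦ Real.exp (-s * t) • k t) (Ioi 0)) :
    ∫ t in Ioi 0, Real.exp (-s * t) • ∫ u in 0..t, k u =
      s⁻¹ • ∫ t in Ioi 0, Real.exp (-s * t) • k t := by
  have h_exp : ∫ t in Ioi 0, Real.exp (-s * t) = s⁻¹ := by
    rw [integral_exp_mul_Ioi (neg_lt_zero.2 hs), mul_zero, Real.exp_zero, neg_div_neg_eq, one_div]
  simp_rw [← intervalIntegral_exp_smul_smul_exp_sub]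
  rw [← h_exp]
  exact integral_posConvolution hk (integrableOn_exp_mul_Ioi (neg_lt_zero.2 hs) 0)
    (ContinuousLinearMap.lsmul ℝ ℝ).flip

end Laplace

lemma aestronglyMeasurable_of_hasDerivAt {α 𝕜 E : Type*} [MeasurableSpace α] {μ : Measure α}
    [NontriviallyNormedField 𝕜] [NormedAddCommGroup E] [NormedSpace 𝕜 E] {f : 𝕜 → α → E}
    {f' : α → E} {x₀ : 𝕜} (hf : ∀ᶠ x in 𝓝 x₀, AEStronglyMeasurable (f x) μ)
    (h_diff : ∀ᵐ a ∂μ, HasDerivAt (f · a) (f' a) x₀) : AEStronglyMeasurable f' μ := by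
  obtain ⟨x, hx_lim, hx_meas⟩ :=
    exists_seq_forall_of_frequently (hf.filter_mono nhdsWithin_le_nhds : ∀ᶠ x in 𝓝[≠] x₀,
      AEStronglyMeasurable (f x) μ).frequently
  refine aestronglyMeasurable_of_tendsto_ae atTop (f := fun n a ↦ slope (f · a) x₀ (x n))
    (fun n ↦ ((hx_meas n).sub hf.self_of_nhds).const_smul (x n - x₀)⁻¹) ?_
  filter_upwards [h_diff] with a ha
  exact (hasDerivAt_iff_tendsto_slope.1 ha).comp hx_lim

lemma hasDerivAt_integral_smul_of_norm_deriv_le {α 𝕜 E : Type*} [MeasurableSpace α]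
    {μ : Measure α} [RCLike 𝕜] [NormedAddCommGroup E] [NormedSpace ℝ E] [NormedSpace 𝕜 E]
    {w F : α → ℝ} {f : α → 𝕜 → E} {x₀ : 𝕜} {U : Set 𝕜} (hU : U ∈ 𝓝 x₀)
    (hf_meas : ∀ᶠ x in 𝓝 x₀, AEStronglyMeasurable (fun a ↦ w a • f a x) μ)
    (hf_int : Integrable (fun a ↦ w a • f a x₀) μ)
    (hF : Integrable (fun a ↦ w a * F a) μ) (hw : ∀ᵐ a ∂μ, 0 ≤ w a)
    (hdom : ∀ᵐ a ∂μ, ∀ x ∈ U, DifferentiableAt 𝕜 (f a) x ∧ ‖deriv (f a) x‖ ≤ F a) :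
    HasDerivAt (fun x ↦ ∫ a, w a • f a x ∂μ) (∫ a, w a • deriv (f a) x₀ ∂μ) x₀ := by
  have h_diff : ∀ᵐ a ∂μ, ∀ x ∈ U, HasDerivAt (w a • f a ·) (w a • deriv (f a) x) x := by
    filter_upwards [hdom] with a ha x hx
    exact (ha x hx).1.hasDerivAt.const_smul (w a)
  have h_bound : ∀ᵐ a ∂μ, ∀ x ∈ U, ‖w a • deriv (f a) x‖ ≤ w a * F a := by
    filter_upwards [hdom, hw] with a ha hwa x hx
    rw [norm_smul, Real.norm_of_nonneg hwa]
    exact mul_le_mul_of_nonneg_left (ha x hx).2 hwa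
  have h_meas : AEStronglyMeasurable (fun a ↦ w a • deriv (f a) x₀) μ :=
    aestronglyMeasurable_of_hasDerivAt hf_meas (h_diff.mono fun a ha ↦ ha x₀ (mem_of_mem_nhds hU))
  exact (hasDerivAt_integral_of_dominated_loc_of_deriv_le
    (F' := fun x a ↦ w a • deriv (f a) x) hU hf_meas hf_int h_meas
    h_bound hF h_diff).2

/-- Here `φ` is the value at `s` of the Laplace exponent of the subordinator, which is `s ^ β` in
the stable case. -/
theorem inverse_stable_subordinator_density_laplace_general {g G : ℝ → ℝ → ℝ} {F : ℝ → ℝ}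
    {s τ₀ φ : ℝ} {U : Set ℝ} (hs : 0 < s) (hU : U ∈ 𝓝 τ₀)
    (hg_lap : ∀ τ ∈ U, ∫ t in Ioi 0, Real.exp (-s * t) * g t τ = Real.exp (-τ * φ))
    (hG : ∀ t τ : ℝ, G t τ = ∫ u in 0..t, g u τ)
    (hF_int : IntegrableOn (fun t ↦ Real.exp (-s * t) * F t) (Ioi 0))
    (hdom : ∀ᵐ t ∂(volume.restrict (Ioi 0)), ∀ τ ∈ U,
      DifferentiableAt ℝ (G t) τ ∧ |deriv (G t) τ| ≤ F t) :
    ∫ t in Ioi 0, Real.exp (-s * t) * -deriv (G t) τ₀ = φ / s * Real.exp (-τ₀ * φ) := by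
  have hg_int (τ : ℝ) (hτ : τ ∈ U) :
      IntegrableOn (fun t ↦ Real.exp (-s * t) * g t τ) (Ioi 0) :=
    .of_integral_ne_zero ((hg_lap τ hτ).trans_ne (Real.exp_ne_zero _))
  have hG_int (τ : ℝ) (hτ : τ ∈ U) :
      IntegrableOn (fun t ↦ Real.exp (-s * t) * G t τ) (Ioi 0) := by
    simpa only [hG, smul_eq_mul] using integrableOn_exp_smul_primitive hs (hg_int τ hτ)
  have hG_lap (τ : ℝ) (hτ : τ ∈ U) :
      ∫ t in Ioi 0, Real.exp (-s * t) * G t τ = s⁻¹ * Real.exp (-τ * φ) := by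
    simpa only [hG, hg_lap τ hτ, smul_eq_mul] using integral_exp_smul_primitive hs (hg_int τ hτ)
  have h_deriv_integral := hasDerivAt_integral_smul_of_norm_deriv_le hU
    (eventually_of_mem hU fun τ hτ ↦ (hG_int τ hτ).aestronglyMeasurable)
    (hG_int τ₀ (mem_of_mem_nhds hU)) hF_int
    (ae_of_all _ fun t ↦ (Real.exp_pos (-s * t)).le) hdom
  have h_deriv_exp : HasDerivAt (fun τ ↦ s⁻¹ * Real.exp (-τ * φ))
      (s⁻¹ * (Real.exp (-τ₀ * φ) * (-1 * φ))) τ₀ :=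
    ((hasDerivAt_neg τ₀).mul_const φ).exp.const_mul s⁻¹
  have h_eq : ∫ t in Ioi 0, Real.exp (-s * t) * deriv (G t) τ₀ =
      s⁻¹ * (Real.exp (-τ₀ * φ) * (-1 * φ)) :=
    h_deriv_integral.unique (h_deriv_exp.congr_of_eventuallyEq (eventually_of_mem hU hG_lap))
  simp_rw [mul_neg]
  rw [integral_neg, h_eq]
  ring

theorem inverse_stable_subordinator_density_laplace (β : ℝ) (hβ : β ∈ Set.Ioo (0 : ℝ) 1)
    (g : ℝ → ℝ → ℝ)
    (hg_meas : Measurable (Function.uncurry g))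
    (hg_nonneg : ∀ t τ : ℝ, 0 < t → 0 < τ → 0 ≤ g t τ)
    (hg_lap : ∀ s : ℝ, 0 < s → ∀ τ : ℝ, 0 < τ →
      ∫ t in Set.Ioi (0 : ℝ), Real.exp (-s * t) * g t τ = Real.exp (-τ * s ^ β))
    (G : ℝ → ℝ → ℝ)
    (hG : ∀ t τ : ℝ, G t τ = ∫ u in (0 : ℝ)..t, g u τ)
    (s τ₀ : ℝ) (hs : 0 < s) (hτ₀ : 0 < τ₀)
    (δ : ℝ) (hδ : 0 < δ) (hδτ₀ : δ < τ₀)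
    (F : ℝ → ℝ) (hF_meas : Measurable F) (hF_nonneg : ∀ t : ℝ, 0 ≤ F t)
    (hF_int : IntegrableOn (fun t => Real.exp (-s * t) * F t) (Set.Ioi 0))
    (hdom : ∀ᵐ t ∂(volume.restrict (Set.Ioi (0 : ℝ))),
      ∀ τ ∈ Set.Ioo (τ₀ - δ) (τ₀ + δ),
        DifferentiableAt ℝ (fun τ' => G t τ') τ ∧
          |deriv (fun τ' => G t τ') τ| ≤ F t) :
    ∫ t in Set.Ioi (0 : ℝ), Real.exp (-s * t) * (-(deriv (fun τ' => G t τ') τ₀)) =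
      s ^ (β - 1) * Real.exp (-τ₀ * s ^ β) := by
  rw [Real.rpow_sub_one hs.ne']
  exact inverse_stable_subordinator_density_laplace_general hs
    (Ioo_mem_nhds (sub_lt_self τ₀ hδ) (lt_add_of_pos_right τ₀ hδ))
    (fun τ hτ ↦ hg_lap s hs τ ((sub_pos.2 hδτ₀).trans hτ.1)) hG hF_int hdom
end

section
/- Let α > 0 and σ > 0, and define R(t) = (σ²/(2α)) (1 − e^{−2αt}) for t > 0 and p : (0,∞) × ℝ → ℝ by p(t,x) = (2π R(t))^{-1/2} · exp( − x² / (2 R(t)) ). Then for every t > 0 and x ∈ ℝ, ∂_t p(t,x) = α ∂_x ( x · p(t,x) ) + (σ²/2) ∂²_x p(t,x). -/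
/-!
The centered Gaussian density with variance `v` satisfies the heat equation `∂ᵥ g = ½ ∂²ₓ g`.
Since also `x g = -v ∂ₓ g`, the drift term `α ∂ₓ (x g)` equals `-α v ∂²ₓ g`, so the right-hand side
of the Fokker–Planck equation is `½ (σ² - 2αv) ∂²ₓ g`. By the chain rule, the equation therefore
reduces to the ordinary differential equation `R' = σ² - 2αR` for the variance.
-/

open Filter Real

/-- The density at `x` of the centered Gaussian law with variance `v`. The variance is a real
number, unlike in `ProbabilityTheory.gaussianPDFReal`, so that one can differentiate in it. -/
noncomputable def centeredGaussianDensity (v x : ℝ) : ℝ :=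
  (2 * π * v) ^ (-(1 / 2) : ℝ) * exp (-x ^ 2 / (2 * v))

/-- The variance at time `t` of the Ornstein–Uhlenbeck process `dX = -α X dt + σ dB` started
at `0`. At `α = 0` division by zero makes this `0` rather than `σ² t`. -/
noncomputable def ouVariance (α σ t : ℝ) : ℝ :=
  σ ^ 2 / (2 * α) * (1 - exp (-(2 * α * t)))

theorem hasDerivAt_centeredGaussianDensity (v x : ℝ) :
    HasDerivAt (centeredGaussianDensity v) (-(x / v) * centeredGaussianDensity v x) x := by
  have hexponent : HasDerivAt (fun y : ℝ => -y ^ 2 / (2 * v)) (-(x / v)) x := by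
    refine ((hasDerivAt_pow 2 x).fun_neg.div_const (2 * v)).congr_deriv ?_
    push_cast
    ring
  refine (hexponent.exp.const_mul ((2 * π * v) ^ (-(1 / 2) : ℝ))).congr_deriv ?_
  rw [centeredGaussianDensity]
  ring

theorem deriv_centeredGaussianDensity (v : ℝ) :
    deriv (centeredGaussianDensity v) = fun x => -(x / v) * centeredGaussianDensity v x :=
  funext fun x => (hasDerivAt_centeredGaussianDensity v x).deriv

theorem iteratedDeriv_two_centeredGaussianDensity (v x : ℝ) :
    iteratedDeriv 2 (centeredGaussianDensity v) x =
      (x ^ 2 / v ^ 2 - 1 / v) * centeredGaussianDensity v x := by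
  rw [iteratedDeriv_succ, iteratedDeriv_one, deriv_centeredGaussianDensity]
  have hfactor : HasDerivAt (fun y : ℝ => -(y / v)) (-(1 / v)) x :=
    ((hasDerivAt_id' x).div_const v).fun_neg
  refine (hfactor.mul (hasDerivAt_centeredGaussianDensity v x)).deriv.trans ?_
  ring

theorem hasDerivAt_centeredGaussianDensity_variance {v : ℝ} (hv : v ≠ 0) (x : ℝ) :
    HasDerivAt (fun w => centeredGaussianDensity w x)
      (iteratedDeriv 2 (centeredGaussianDensity v) x / 2) v := by
  have hbase : 2 * π * v ≠ 0 := mul_ne_zero two_pi_pos.ne' hv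
  have hprefactor : HasDerivAt (fun w : ℝ => (2 * π * w) ^ (-(1 / 2) : ℝ))
      (-(1 / (2 * v)) * (2 * π * v) ^ (-(1 / 2) : ℝ)) v := by
    refine (((hasDerivAt_id' v).const_mul (2 * π)).rpow_const (Or.inl hbase)).congr_deriv ?_
    rw [rpow_sub_one hbase]
    field_simp
  have hexponent : HasDerivAt (fun w : ℝ => -x ^ 2 / (2 * w)) (x ^ 2 / (2 * v ^ 2)) v := by
    refine ((hasDerivAt_const v (-x ^ 2)).fun_div ((hasDerivAt_id' v).const_mul 2)
      (mul_ne_zero two_ne_zero hv)).congr_deriv ?_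
    field_simp
    ring
  refine (hprefactor.mul hexponent.exp).congr_deriv ?_
  rw [iteratedDeriv_two_centeredGaussianDensity, centeredGaussianDensity]
  field_simp
  ring

theorem deriv_id_mul_centeredGaussianDensity {v : ℝ} (hv : v ≠ 0) (x : ℝ) :
    deriv (fun y => y * centeredGaussianDensity v y) x =
      -v * iteratedDeriv 2 (centeredGaussianDensity v) x := by
  have hscale : (fun y => y * centeredGaussianDensity v y) =
      fun y => -v * deriv (centeredGaussianDensity v) y := by
    rw [deriv_centeredGaussianDensity]
    funext y
    field_simp
  rw [hscale, deriv_const_mul_field, iteratedDeriv_succ, iteratedDeriv_one]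

theorem centeredGaussianDensity_fokkerPlanck {α σ t : ℝ} {R : ℝ → ℝ} (hR₀ : R t ≠ 0)
    (hR : HasDerivAt R (σ ^ 2 - 2 * α * R t) t) (x : ℝ) :
    HasDerivAt (fun s => centeredGaussianDensity (R s) x)
      (α * deriv (fun y => y * centeredGaussianDensity (R t) y) x +
        σ ^ 2 / 2 * iteratedDeriv 2 (centeredGaussianDensity (R t)) x) t := by
  refine ((hasDerivAt_centeredGaussianDensity_variance hR₀ x).comp t hR).congr_deriv ?_
  rw [deriv_id_mul_centeredGaussianDensity hR₀]
  ring

theorem ouVariance_ne_zero {α σ t : ℝ} (hα : α ≠ 0) (hσ : σ ≠ 0) (ht : t ≠ 0) :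
    ouVariance α σ t ≠ 0 := by
  have hexp : exp (-(2 * α * t)) ≠ 1 := by
    simp [hα, ht]
  exact mul_ne_zero (by positivity) (sub_ne_zero.mpr hexp.symm)

theorem hasDerivAt_ouVariance {α : ℝ} (hα : α ≠ 0) (σ t : ℝ) :
    HasDerivAt (ouVariance α σ) (σ ^ 2 - 2 * α * ouVariance α σ t) t := by
  have hexponent : HasDerivAt (fun s : ℝ => -(2 * α * s)) (-(2 * α)) t := by
    simpa using ((hasDerivAt_id' t).const_mul (2 * α)).fun_neg
  refine ((hexponent.exp.const_sub 1).const_mul (σ ^ 2 / (2 * α))).congr_deriv ?_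
  rw [ouVariance]
  field_simp
  ring

theorem fpk_ou_classical_form_general {α σ : ℝ} (hα : α ≠ 0) (hσ : σ ≠ 0) {R : ℝ → ℝ}
    (hR : ∀ t, 0 < t → R t = σ ^ 2 / (2 * α) * (1 - exp (-(2 * α * t))))
    {p : ℝ → ℝ → ℝ}
    (hp : ∀ t, 0 < t → ∀ x,
      p t x = (2 * π * R t) ^ (-(1 / 2) : ℝ) * exp (-x ^ 2 / (2 * R t)))
    {t : ℝ} (ht : 0 < t) (x : ℝ) :
    deriv (fun s => p s x) t =
      α * deriv (fun y => y * p t y) x +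
        σ ^ 2 / 2 * iteratedDeriv 2 (fun y => p t y) x := by
  have hdensity : ∀ s, 0 < s → p s = centeredGaussianDensity (ouVariance α σ s) := fun s hs =>
    funext fun y => by rw [hp s hs, hR s hs, centeredGaussianDensity, ouVariance]
  have hnear : (fun s => p s x) =ᶠ[nhds t]
      fun s => centeredGaussianDensity (ouVariance α σ s) x :=
    (eventually_gt_nhds ht).mono fun s hs => congrFun (hdensity s hs) x
  rw [hnear.deriv_eq, hdensity t ht]
  exact (centeredGaussianDensity_fokkerPlanck (ouVariance_ne_zero hα hσ ht.ne')
    (hasDerivAt_ouVariance hα σ t) x).deriv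

/- STATEMENT 14 (Example 5, equation (46)): classical FPK equation for the centered
Ornstein-Uhlenbeck process, with variance function R(t) = (σ²/(2α))(1 - e^(-2αt)). -/
theorem fpk_ou_classical_form (α σ : ℝ) (hα : 0 < α) (hσ : 0 < σ)
    (R : ℝ → ℝ)
    (hR : ∀ t : ℝ, 0 < t → R t = σ ^ 2 / (2 * α) * (1 - Real.exp (-(2 * α * t))))
    (p : ℝ → ℝ → ℝ)
    (hp : ∀ t : ℝ, 0 < t → ∀ x : ℝ,
      p t x = (2 * Real.pi * R t) ^ (-(1 / 2) : ℝ) *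
        Real.exp (-x ^ 2 / (2 * R t)))
    (t : ℝ) (ht : 0 < t) (x : ℝ) :
    deriv (fun s => p s x) t =
      α * deriv (fun y => y * p t y) x +
        σ ^ 2 / 2 * iteratedDeriv 2 (fun y => p t y) x :=
  fpk_ou_classical_form_general hα.ne' hσ.ne' hR hp ht x
end
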